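/- (Convergence of the iterative optimal polynomial approximation algorithm.) Let S₁,…,S_d be pairwise commuting N×N complex matrices with joint spectrum Λ = {λ_1,…,λ_N}, let h be a multivariate polynomial such that H = h(S₁,…,S_d) is invertible, let L ≥ 0, and let g̃ be a multivariate polynomial of total degree at most L that minimizes max_{1 ≤ i ≤ N} |1 − g(λ_i) h(λ_i)| over all multivariate polynomials g of total degree at most L. Suppose a_L := max_{1 ≤ i ≤ N} |1 − g̃(λ_i) h(λ_i)| < 1. Then for every b ∈ ℂ^N the iterates x⁽ᵐ⁾ of the iterative approximation algorithm with G = g̃(S₁,…,S_d) converge exponentially to H⁻¹ b: for every r with a_L < r < 1 there exists C > 0 such that ‖x⁽ᵐ⁾ − H⁻¹ b‖₂ ≤ C ‖H⁻¹ b‖₂ rᵐ for all m ≥ 1. -/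

import Mathlib

open Matrix

/-- The Euclidean (ℓ²) norm of a vector in ℂ^N. -/
noncomputable def l2norm {N : ℕ} (v : Fin N → ℂ) : ℝ :=
  ‖(EuclideanSpace.equiv (Fin N) ℂ).symm v‖

/-- The polynomial graph filter `h(S₁,…,S_d) = ∑ h_{l₁,…,l_d} S₁^{l₁}⋯S_d^{l_d}` associated with
a multivariate polynomial `h` and matrices `S₁,…,S_d`. -/
noncomputable def polyFilter {N d : ℕ} (S : Fin d → Matrix (Fin N) (Fin N) ℂ)
    (h : MvPolynomial (Fin d) ℂ) : Matrix (Fin N) (Fin N) ℂ :=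
  ∑ m ∈ h.support, h.coeff m • (List.ofFn fun k => S k ^ m k).prod

/-- `M` becomes upper triangular with diagonal `c` after conjugation by `U`. -/
def TriDiag {N : ℕ} (U M : Matrix (Fin N) (Fin N) ℂ) (c : Fin N → ℂ) : Prop :=
  (U * M * Uᴴ).BlockTriangular (id : Fin N → Fin N) ∧ ∀ i, (U * M * Uᴴ) i i = c i

theorem TriDiag.one {N : ℕ} {U : Matrix (Fin N) (Fin N) ℂ} (hU : U * Uᴴ = 1) :
    TriDiag U 1 1 := by
  constructor
  · rw [mul_one, hU]; exact Matrix.blockTriangular_one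
  · intro i; rw [mul_one, hU]; simp

theorem TriDiag.mul {N : ℕ} {U A B : Matrix (Fin N) (Fin N) ℂ} {a b : Fin N → ℂ}
    (hU : Uᴴ * U = 1) (hA : TriDiag U A a) (hB : TriDiag U B b) :
    TriDiag U (A * B) (a * b) := by
  have key : U * (A * B) * Uᴴ = (U * A * Uᴴ) * (U * B * Uᴴ) := by
    calc U * (A * B) * Uᴴ = U * A * 1 * B * Uᴴ := by simp [mul_assoc]
      _ = _ := by rw [← hU]; simp only [mul_assoc]
  constructor
  · rw [key]; exact hA.1.mul hB.1
  · intro i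
    rw [key, Matrix.mul_apply, Finset.sum_eq_single i]
    · rw [hA.2, hB.2]; rfl
    · intro j _ hj
      rcases lt_or_gt_of_ne hj with hlt | hlt
      · rw [hA.1 (by exact hlt), zero_mul]
      · rw [hB.1 (by exact hlt), mul_zero]
    · simp

theorem TriDiag.pow {N : ℕ} {U A : Matrix (Fin N) (Fin N) ℂ} {a : Fin N → ℂ}
    (hU : Uᴴ * U = 1) (hU' : U * Uᴴ = 1) (hA : TriDiag U A a) (n : ℕ) :
    TriDiag U (A ^ n) (a ^ n) := by
  induction n with
  | zero => simpa using TriDiag.one hU'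
  | succ n ih => rw [pow_succ, pow_succ]; exact ih.mul hU hA

theorem TriDiag.sub {N : ℕ} {U A B : Matrix (Fin N) (Fin N) ℂ} {a b : Fin N → ℂ}
    (hA : TriDiag U A a) (hB : TriDiag U B b) : TriDiag U (A - B) (a - b) := by
  constructor
  · rw [mul_sub, sub_mul]; exact hA.1.sub hB.1
  · intro i; rw [mul_sub, sub_mul, Matrix.sub_apply, hA.2, hB.2]; rfl

theorem TriDiag.smul {N : ℕ} {U A : Matrix (Fin N) (Fin N) ℂ} {a : Fin N → ℂ} (c : ℂ)
    (hA : TriDiag U A a) : TriDiag U (c • A) (c • a) := by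
  constructor
  · intro i j hij
    rw [mul_smul_comm, smul_mul_assoc, Matrix.smul_apply, hA.1 hij, smul_zero]
  · intro i; rw [mul_smul_comm, smul_mul_assoc, Matrix.smul_apply, hA.2]; rfl

theorem TriDiag.sum {N : ℕ} {U : Matrix (Fin N) (Fin N) ℂ} {ι : Type*} (s : Finset ι)
    (A : ι → Matrix (Fin N) (Fin N) ℂ) (a : ι → Fin N → ℂ)
    (hA : ∀ k ∈ s, TriDiag U (A k) (a k)) : TriDiag U (∑ k ∈ s, A k) (∑ k ∈ s, a k) := by
  constructor
  · intro i j hij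
    rw [Finset.mul_sum, Finset.sum_mul, Matrix.sum_apply]
    exact Finset.sum_eq_zero fun k hk => (hA k hk).1 hij
  · intro i
    rw [Finset.mul_sum, Finset.sum_mul, Matrix.sum_apply, Finset.sum_apply]
    exact Finset.sum_congr rfl fun k hk => (hA k hk).2 i

theorem TriDiag.prod {N : ℕ} {U : Matrix (Fin N) (Fin N) ℂ}
    (hU : Uᴴ * U = 1) (hU' : U * Uᴴ = 1) {d : ℕ}
    (A : Fin d → Matrix (Fin N) (Fin N) ℂ) (a : Fin d → Fin N → ℂ)
    (hA : ∀ k, TriDiag U (A k) (a k)) : TriDiag U (List.ofFn A).prod (∏ k, a k) := by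
  induction d with
  | zero => simpa using TriDiag.one hU'
  | succ d ih =>
    rw [List.ofFn_succ, List.prod_cons, Fin.prod_univ_succ]
    exact (hA 0).mul hU (ih _ _ fun k => hA k.succ)

theorem TriDiag.polyFilter {N d : ℕ} {U : Matrix (Fin N) (Fin N) ℂ}
    (hU : Uᴴ * U = 1) (hU' : U * Uᴴ = 1) (S : Fin d → Matrix (Fin N) (Fin N) ℂ)
    (lam : Fin N → Fin d → ℂ) (hS : ∀ k, TriDiag U (S k) (fun i => lam i k))
    (h : MvPolynomial (Fin d) ℂ) :
    TriDiag U (polyFilter S h) (fun i => MvPolynomial.eval (lam i) h) := by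
  have e : (fun i => MvPolynomial.eval (lam i) h) =
      ∑ m ∈ h.support, h.coeff m • ∏ k, (fun i => lam i k) ^ m k := by
    funext i
    rw [MvPolynomial.eval_eq']
    simp [Finset.sum_apply, Finset.prod_apply]
  rw [e]
  exact TriDiag.sum _ _ _ fun m _ => (TriDiag.prod hU hU' _ _ fun k => (hS k).pow hU hU' _).smul _

theorem TriDiag.spectrum {N : ℕ} {U A : Matrix (Fin N) (Fin N) ℂ} {a : Fin N → ℂ}
    (hU : Uᴴ * U = 1) (hU' : U * Uᴴ = 1) (hA : TriDiag U A a) {z : ℂ}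
    (hz : z ∈ spectrum ℂ A) : ∃ i, z = a i := by
  by_contra! hne
  apply hz
  have ht := ((TriDiag.one hU').smul z).sub hA
  have hdet : (z • (1 : Matrix (Fin N) (Fin N) ℂ) - A).det = ∏ i, (z - a i) := by
    have h1 := Matrix.det_of_upperTriangular ht.1
    rw [Matrix.det_mul, Matrix.det_mul, mul_right_comm, ← Matrix.det_mul, hU', Matrix.det_one,
      one_mul] at h1
    rw [h1]
    refine Finset.prod_congr rfl fun i _ => ?_
    rw [ht.2]; simp
  rw [spectrum.mem_resolventSet_iff, Algebra.algebraMap_eq_smul_one, Matrix.isUnit_iff_isUnit_det, hdet, isUnit_iff_ne_zero]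
  exact Finset.prod_ne_zero_iff.2 fun i _ => sub_ne_zero.2 (hne i)

open scoped Matrix.Norms.L2Operator in
theorem pow_bound_of_spectrum {N : ℕ} [NeZero N] (A : Matrix (Fin N) (Fin N) ℂ) (a r : ℝ)
    (ha : 0 ≤ a) (har : a < r) (hs : ∀ z ∈ spectrum ℂ A, ‖z‖ ≤ a) :
    ∃ C : ℝ, 0 < C ∧ ∀ (m : ℕ) (v : Fin N → ℂ), l2norm ((A ^ m) *ᵥ v) ≤ C * l2norm v * r ^ m := by
  have hr : 0 < r := ha.trans_lt har
  have hsr : spectralRadius ℂ A < ENNReal.ofReal r := by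
    refine lt_of_le_of_lt (b := ENNReal.ofReal a) ?_ ((ENNReal.ofReal_lt_ofReal_iff hr).2 har)
    refine iSup₂_le fun z hz => ?_
    rw [← enorm_eq_nnnorm, ← ofReal_norm]
    exact ENNReal.ofReal_le_ofReal (hs z hz)
  have ev := (spectrum.pow_norm_pow_one_div_tendsto_nhds_spectralRadius A).eventually_lt_const hsr
  have hO : (fun n : ℕ => ‖A ^ n‖) =O[Filter.atTop] (fun n : ℕ => r ^ n) := by
    refine Asymptotics.IsBigO.of_bound 1 ?_
    filter_upwards [ev, Filter.eventually_ge_atTop 1] with n hn hn1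
    have h1 : ‖A ^ n‖ ^ (1 / n : ℝ) ≤ r := by
      exact ((ENNReal.ofReal_lt_ofReal_iff hr).1 hn).le
    have h2 := pow_le_pow_left₀ (by positivity) h1 n
    rw [one_div, Real.rpow_inv_natCast_pow (norm_nonneg _) (by omega)] at h2
    rw [one_mul, norm_norm, Real.norm_of_nonneg (by positivity)]
    exact h2
  obtain ⟨C, hC, hb⟩ := Asymptotics.bound_of_isBigO_nat_atTop hO
  refine ⟨C, hC, fun m v => ?_⟩
  have h1 := hb (x := m) (by positivity)
  rw [norm_norm, Real.norm_of_nonneg (by positivity)] at h1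
  have h2 : l2norm ((A ^ m) *ᵥ v) ≤ ‖A ^ m‖ * l2norm v :=
    Matrix.l2_opNorm_mulVec (A ^ m) ((EuclideanSpace.equiv (Fin N) ℂ).symm v)
  have h3 : 0 ≤ l2norm v := norm_nonneg _
  calc _ ≤ ‖A ^ m‖ * l2norm v := h2
    _ ≤ (C * r ^ m) * l2norm v := by gcongr
    _ = _ := by ring

/-- convergence of the IOPA algorithm: if `g̃` is an optimal polynomial of total
degree at most `L` minimizing `max_i |1 − g(λᵢ) h(λᵢ)|`, and
`a_L = max_i |1 − g̃(λᵢ) h(λᵢ)| < 1`, then for every `r ∈ (a_L, 1)` there is `C > 0` such that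
for every `b` the iterates of the iterative approximation algorithm with `G = g̃(S₁,…,S_d)`
satisfy `‖x⁽ᵐ⁾ − H⁻¹ b‖₂ ≤ C ‖H⁻¹ b‖₂ rᵐ` for all `m ≥ 1`. -/
theorem IOPA_exponential_convergence {N d : ℕ} [NeZero N]
    (S : Fin d → Matrix (Fin N) (Fin N) ℂ)
    (hcomm : ∀ k k' : Fin d, Commute (S k) (S k'))
    (U : Matrix (Fin N) (Fin N) ℂ) (hU : U ∈ Matrix.unitaryGroup (Fin N) ℂ)
    (htri : ∀ k : Fin d, (U * S k * Uᴴ).BlockTriangular (id : Fin N → Fin N))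
    (lam : Fin N → Fin d → ℂ)
    (hlam : ∀ (i : Fin N) (k : Fin d), lam i k = (U * S k * Uᴴ) i i)
    (h : MvPolynomial (Fin d) ℂ)
    (H : Matrix (Fin N) (Fin N) ℂ) (hH : H = polyFilter S h) (hinv : IsUnit H)
    (L : ℕ) (gt : MvPolynomial (Fin d) ℂ) (hgtdeg : gt.totalDegree ≤ L)
    (hmin : ∀ g : MvPolynomial (Fin d) ℂ, g.totalDegree ≤ L →
      (⨆ i : Fin N, ‖1 - MvPolynomial.eval (lam i) gt * MvPolynomial.eval (lam i) h‖) ≤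
        ⨆ i : Fin N, ‖1 - MvPolynomial.eval (lam i) g * MvPolynomial.eval (lam i) h‖)
    (aL : ℝ)
    (haL : aL = ⨆ i : Fin N,
      ‖1 - MvPolynomial.eval (lam i) gt * MvPolynomial.eval (lam i) h‖)
    (haL1 : aL < 1) :
    ∀ r : ℝ, aL < r → r < 1 →
      ∃ C : ℝ, 0 < C ∧
        ∀ (b : Fin N → ℂ) (e z x : ℕ → Fin N → ℂ),
          e 0 = b → x 0 = 0 →
          (∀ m : ℕ, z (m + 1) = (polyFilter S gt).mulVec (e m)) →
          (∀ m : ℕ, e (m + 1) = e m - H.mulVec (z (m + 1))) →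
          (∀ m : ℕ, x (m + 1) = x m + z (m + 1)) →
          ∀ m : ℕ, 1 ≤ m →
            l2norm (x m - H⁻¹.mulVec b) ≤ C * l2norm (H⁻¹.mulVec b) * r ^ m := by
  intro r har hr1
  have hUU : Uᴴ * U = 1 := (Matrix.mem_unitaryGroup_iff').1 hU
  have hUU' : U * Uᴴ = 1 := (Matrix.mem_unitaryGroup_iff).1 hU
  have hS : ∀ k, TriDiag U (S k) (fun i => lam i k) :=
    fun k => ⟨htri k, fun i => (hlam i k).symm⟩
  have hG := TriDiag.polyFilter hUU hUU' S lam hS gt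
  have hHt := TriDiag.polyFilter hUU hUU' S lam hS h
  have hA := (TriDiag.one hUU').sub (hG.mul hUU hHt)
  rw [← hH] at hA
  have hle : ∀ i, ‖1 - MvPolynomial.eval (lam i) gt * MvPolynomial.eval (lam i) h‖ ≤ aL := by
    intro i
    rw [haL]
    exact le_ciSup (f := fun i => ‖1 - MvPolynomial.eval (lam i) gt *
      MvPolynomial.eval (lam i) h‖) (Set.finite_range _).bddAbove i
  have ha0 : 0 ≤ aL := (norm_nonneg _).trans (hle 0)
  obtain ⟨C, hC, hb⟩ := pow_bound_of_spectrum (1 - polyFilter S gt * H) aL r ha0 har (by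
    intro z hz
    obtain ⟨i, rfl⟩ := hA.spectrum hUU hUU' hz
    exact hle i)
  refine ⟨C, hC, ?_⟩
  intro b e z x he hx hz hes hxs m _
  have hdet : IsUnit H.det := (Matrix.isUnit_iff_isUnit_det H).1 hinv
  have hHb : H *ᵥ (H⁻¹ *ᵥ b) = b := by
    rw [Matrix.mulVec_mulVec, Matrix.mul_nonsing_inv _ hdet, Matrix.one_mulVec]
  have hey : ∀ n, H *ᵥ (H⁻¹ *ᵥ b - x n) = e n := by
    intro n
    induction n with
    | zero => rw [hx, he, sub_zero, hHb]
    | succ n ih => rw [hxs, hes, ← ih, ← sub_sub, Matrix.mulVec_sub H (_ - _)]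
  have hy : ∀ n, H⁻¹ *ᵥ b - x n = ((1 - polyFilter S gt * H) ^ n) *ᵥ (H⁻¹ *ᵥ b) := by
    intro n
    induction n with
    | zero => simp [hx]
    | succ n ih =>
      rw [pow_succ', ← Matrix.mulVec_mulVec, ← ih, Matrix.sub_mulVec, Matrix.one_mulVec,
        ← Matrix.mulVec_mulVec, hey, hxs, hz, sub_sub]
  have hnorm : l2norm (x m - H⁻¹ *ᵥ b) = l2norm (H⁻¹ *ᵥ b - x m) := by
    unfold l2norm
    rw [map_sub, map_sub, norm_sub_rev]
  rw [hnorm, hy]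
  exact hb m _
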